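/- arXiv:2406.19151 — 2 statements merged into one kernel-verified Lean document; each statement's English description precedes it below -/
import Mathlib

section
/- Let G be a finite commutative group and let a, b ∈ G be such that the subgroup generated by {a, b} is all of G and (orderOf a) · (orderOf b) = |G|. Then the map Fin (orderOf a) × Fin (orderOf b) → G given by (i, j) ↦ a^i · b^j is a bijection; in particular G is isomorphic to the direct product of the cyclic groups generated by a and by b. -/
/-- If `a, b` generate a finite commutative group `G` and
`orderOf a * orderOf b = |G|`, then `(i, j) ↦ a^i b^j` is a bijection
`Fin (orderOf a) × Fin (orderOf b) → G`; in particular `G` is isomorphic to the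
direct product of the cyclic subgroups generated by `a` and by `b`. -/
theorem stmt4 {G : Type*} [CommGroup G] [Fintype G] (a b : G)
    (hgen : Subgroup.closure ({a, b} : Set G) = ⊤)
    (hord : orderOf a * orderOf b = Fintype.card G) :
    Function.Bijective
      (fun p : Fin (orderOf a) × Fin (orderOf b) => a ^ (p.1 : ℕ) * b ^ (p.2 : ℕ)) ∧
    Nonempty ((↥(Subgroup.zpowers a) × ↥(Subgroup.zpowers b)) ≃* G) := by
  have hrep : ∀ g : G, ∃ m n : ℤ, a ^ m * b ^ n = g := fun g =>
    Subgroup.mem_closure_pair.mp (hgen ▸ Subgroup.mem_top g)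
  have hred : ∀ (x : G) (m : ℤ), ∃ i : Fin (orderOf x), x ^ (i : ℕ) = x ^ m := by
    intro x m
    have hx : x ^ m ∈ Submonoid.powers x :=
      mem_powers_iff_mem_zpowers.mpr ⟨m, rfl⟩
    obtain ⟨k, hk⟩ := hx
    refine ⟨⟨k % orderOf x, Nat.mod_lt _ (orderOf_pos x)⟩, ?_⟩
    simpa [pow_mod_orderOf] using hk
  constructor
  · rw [Fintype.bijective_iff_surjective_and_card]
    refine ⟨fun g => ?_, by simp [hord]⟩
    obtain ⟨m, n, h⟩ := hrep g
    obtain ⟨i, hi⟩ := hred a m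
    obtain ⟨j, hj⟩ := hred b n
    exact ⟨(i, j), by simp only [hi, hj, h]⟩
  · let f : (↥(Subgroup.zpowers a) × ↥(Subgroup.zpowers b)) →* G :=
      (Subgroup.zpowers a).subtype.coprod (Subgroup.zpowers b).subtype
    have hf : Function.Bijective f := by
      rw [Nat.bijective_iff_surjective_and_card]
      refine ⟨fun g => ?_, by
        rw [Nat.card_prod, Nat.card_zpowers, Nat.card_zpowers, hord, Nat.card_eq_fintype_card]⟩
      obtain ⟨m, n, h⟩ := hrep g
      exact ⟨(⟨a ^ m, m, rfl⟩, ⟨b ^ n, n, rfl⟩), by simpa [f] using h⟩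
    exact ⟨MulEquiv.ofBijective f hf⟩
end

section
/- Let l = 3 and m = 5, and over 𝔽₂ set A = x + z⁴ and B = x + y² + z² (15×15 matrices). Then dim(ker A ∩ ker B) = 2, i.e. the 𝔽₂-dimension of the intersection of the kernels of the linear maps v ↦ A·v and v ↦ B·v equals 2; hence the associated trivariate bicycle code encodes k = 2·dim(ker A ∩ ker B) = 4 logical qubits into n = 2lm = 30 physical qubits. -/
open Kronecker

/-- The `n × n` cyclic shift matrix over `𝔽₂`. -/
def cyclicShift (n : ℕ) : Matrix (Fin n) (Fin n) (ZMod 2) :=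
  Matrix.of fun i j => if (j : ℕ) = ((i : ℕ) + 1) % n then 1 else 0

/-- `x = S_3 ⊗ I_5`. -/
def xM : Matrix (Fin 3 × Fin 5) (Fin 3 × Fin 5) (ZMod 2) :=
  cyclicShift 3 ⊗ₖ (1 : Matrix (Fin 5) (Fin 5) (ZMod 2))

/-- `y = I_3 ⊗ S_5`. -/
def yM : Matrix (Fin 3 × Fin 5) (Fin 3 × Fin 5) (ZMod 2) :=
  (1 : Matrix (Fin 3) (Fin 3) (ZMod 2)) ⊗ₖ cyclicShift 5

/-- `z = S_3 ⊗ S_5`. -/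
def zM : Matrix (Fin 3 × Fin 5) (Fin 3 × Fin 5) (ZMod 2) :=
  cyclicShift 3 ⊗ₖ cyclicShift 5

/-- `A = x + z⁴` of the weight-5 `[[30,4,5]]` code. -/
def Amat : Matrix (Fin 3 × Fin 5) (Fin 3 × Fin 5) (ZMod 2) := xM + zM ^ 4

/-- `B = x + y² + z²` of the weight-5 `[[30,4,5]]` code. -/
def Bmat : Matrix (Fin 3 × Fin 5) (Fin 3 × Fin 5) (ZMod 2) := xM + yM ^ 2 + zM ^ 2

theorem cyclicShift_apply_succ {n : ℕ} [NeZero n] (hn : 1 < n) (i j : Fin n) :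
    cyclicShift n i j = if j = i + 1 then 1 else 0 := by
  have h : ((j : ℕ) = ((i : ℕ) + 1) % n) ↔ j = i + 1 := by
    rw [Fin.ext_iff, Fin.val_add, Fin.val_one', Nat.mod_eq_of_lt hn]
  simp [cyclicShift, h]

theorem xM_mulVec (v : Fin 3 × Fin 5 → ZMod 2) :
    xM.mulVec v = fun p => v (p.1 + 1, p.2) := by
  funext p
  simp [xM, Matrix.mulVec, dotProduct, Fintype.sum_prod_type, Matrix.kroneckerMap_apply,
    cyclicShift_apply_succ, Matrix.one_apply, ite_mul]

theorem yM_mulVec (v : Fin 3 × Fin 5 → ZMod 2) :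
    yM.mulVec v = fun p => v (p.1, p.2 + 1) := by
  funext p
  simp [yM, Matrix.mulVec, dotProduct, Fintype.sum_prod_type, Matrix.kroneckerMap_apply,
    cyclicShift_apply_succ, Matrix.one_apply, ite_mul]

theorem zM_mulVec (v : Fin 3 × Fin 5 → ZMod 2) :
    zM.mulVec v = fun p => v (p.1 + 1, p.2 + 1) := by
  funext p
  simp [zM, Matrix.mulVec, dotProduct, Fintype.sum_prod_type, Matrix.kroneckerMap_apply,
    cyclicShift_apply_succ, ite_mul]

theorem Amat_mulVec (v : Fin 3 × Fin 5 → ZMod 2) :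
    Amat.mulVec v = fun p => v (p.1 + 1, p.2) + v (p.1 + 1, p.2 + 4) := by
  funext p
  have h3 : p.1 + 1 + 1 + 1 + 1 = p.1 + 1 := by revert p; decide
  have h5 : p.2 + 1 + 1 + 1 + 1 = p.2 + 4 := by revert p; decide
  simp only [Amat, Matrix.add_mulVec, pow_succ, pow_zero, one_mul, ← Matrix.mulVec_mulVec,
    xM_mulVec, zM_mulVec, Pi.add_apply, h3, h5]

theorem Bmat_mulVec (v : Fin 3 × Fin 5 → ZMod 2) :
    Bmat.mulVec v =
      fun p => v (p.1 + 1, p.2) + v (p.1, p.2 + 2) + v (p.1 + 2, p.2 + 2) := by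
  funext p
  have h3 : p.1 + 1 + 1 = p.1 + 2 := by revert p; decide
  have h5 : p.2 + 1 + 1 = p.2 + 2 := by revert p; decide
  simp only [Bmat, Matrix.add_mulVec, pow_succ, pow_zero, one_mul, ← Matrix.mulVec_mulVec,
    xM_mulVec, yM_mulVec, zM_mulVec, Pi.add_apply, h3, h5]

/-- Membership in the joint kernel: constant along the second coordinate, and with rows
summing to zero. -/
theorem mem_ker_iff (v : Fin 3 × Fin 5 → ZMod 2) :
    v ∈ LinearMap.ker Amat.mulVecLin ⊓ LinearMap.ker Bmat.mulVecLin ↔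
      (∀ i j, v (i, j) = v (i, 0)) ∧ v (2, 0) = v (0, 0) + v (1, 0) := by
  rw [Submodule.mem_inf, LinearMap.mem_ker, LinearMap.mem_ker, Matrix.mulVecLin_apply,
    Matrix.mulVecLin_apply, Amat_mulVec, Bmat_mulVec]
  constructor
  · rintro ⟨hA, hB⟩
    have step : ∀ i j, v (i, j) = v (i, j + 4) := by
      intro i j
      have h := congrFun hA (i + 2, j)
      have e : i + 2 + 1 = i := by clear h; revert i; decide
      simp only [e, Pi.zero_apply] at h
      exact CharTwo.add_eq_zero.mp h
    have const : ∀ i j, v (i, j) = v (i, 0) := by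
      intro i j
      have h1 : v (i, 1) = v (i, 0) := step i 1
      have h2 : v (i, 2) = v (i, 1) := step i 2
      have h3 : v (i, 3) = v (i, 2) := step i 3
      have h4 : v (i, 4) = v (i, 3) := step i 4
      fin_cases j <;> simp [h1, h2, h3, h4]
    refine ⟨const, ?_⟩
    have h : v (1, 0) + v (0, 2) + v (2, 2) = 0 := congrFun hB (0, 0)
    rw [const 0 2, const 2 2] at h
    rw [← CharTwo.add_eq_zero.mp h, add_comm]
  · rintro ⟨const, hs⟩
    constructor
    · funext p
      simp only [const _ (p.2), const _ (p.2 + 4), Pi.zero_apply]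
      exact CharTwo.add_self_eq_zero _
    · funext p
      obtain ⟨i, j⟩ := p
      simp only [const _ j, const _ (j + 2), Pi.zero_apply]
      have key : v (0, 0) + v (1, 0) + v (2, 0) = 0 := by
        rw [hs]; exact CharTwo.add_self_eq_zero _
      fin_cases i
      · change v (1, 0) + v (0, 0) + v (2, 0) = 0
        rw [← key]; ring
      · change v (2, 0) + v (1, 0) + v (0, 0) = 0
        rw [← key]; ring
      · change v (0, 0) + v (2, 0) + v (1, 0) = 0
        rw [← key]; ring

/-- The joint kernel is parametrised by the two free values `v (0, 0)` and `v (1, 0)`. -/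
def kerEquiv :
    ↥(LinearMap.ker Amat.mulVecLin ⊓ LinearMap.ker Bmat.mulVecLin) ≃ₗ[ZMod 2]
      (Fin 2 → ZMod 2) where
  toFun v := ![v.1 (0, 0), v.1 (1, 0)]
  map_add' u v := by
    funext k; fin_cases k <;> rfl
  map_smul' c v := by
    funext k; fin_cases k <;> rfl
  invFun w := ⟨fun p => ![w 0, w 1, w 0 + w 1] p.1, by
    rw [mem_ker_iff]
    exact ⟨fun _ _ => rfl, rfl⟩⟩
  left_inv v := by
    obtain ⟨const, hs⟩ := (mem_ker_iff v.1).mp v.2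
    apply Subtype.ext
    funext p
    obtain ⟨i, j⟩ := p
    rw [const i j]
    fin_cases i
    · rfl
    · rfl
    · exact hs.symm
  right_inv w := by
    funext k; fin_cases k <;> rfl

/-- For the weight-5 `[[30,4,5]]` trivariate bicycle code (`l = 3`, `m = 5`,
`A = x + z⁴`, `B = x + y² + z²`), `dim(ker A ∩ ker B) = 2`, so the code encodes
`k = 4` logical qubits into `n = 30` physical qubits. -/
theorem stmt11 :
    Module.finrank (ZMod 2)
      ↥(LinearMap.ker Amat.mulVecLin ⊓ LinearMap.ker Bmat.mulVecLin) = 2 := by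
  rw [LinearEquiv.finrank_eq kerEquiv, Module.finrank_fin_fun]
end
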